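/- Let p ∈ (1,∞) and let μ be a probability measure on ℝ^d, absolutely continuous with respect to Lebesgue measure, with finite p-th moment. Let f : ℝ^d → ℝ be continuous with f(x) ≤ c(1+|x|^p). Then sup{∫ f dν : W_p(μ,ν) ≤ δ} = sup{∫ f dν : W_p(μ,ν) ≤ δ, ν ≪ Lebesgue}. -/

import Mathlib

open Set MeasureTheory Filter Topology
open scoped ENNReal RealInnerProductSpace

/-- The `p`-Wasserstein distance on `ℝ^d` with respect to the Euclidean norm. -/
noncomputable def Wp {d : ℕ} (p : ℝ)
    (μ ν : Measure (EuclideanSpace ℝ (Fin d))) : ℝ≥0∞ :=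
  ⨅ π ∈ {π : Measure (EuclideanSpace ℝ (Fin d) × EuclideanSpace ℝ (Fin d)) |
      π.map Prod.fst = μ ∧ π.map Prod.snd = ν},
    (∫⁻ z, ENNReal.ofReal (‖z.1 - z.2‖ ^ p) ∂π) ^ (1 / p)

open scoped NNReal

/-!
Let `W_p(μ, ν) ≤ δ`. If `δ = 0` then `ν = μ`, because the Lévy–Prokhorov distance is dominated by
the transport cost. If `δ > 0`, mix `ν` with a little of a truncation `ν₀` of `μ` to bounded
support, chosen with `W_p(μ, ν₀) < δ`: since `W_p ^ p` is convex, the mixture lies strictly inside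
the ball, and the integral of `f` hardly changes. It then remains to smooth a measure that has some
room left. Displace each point `y` by `r y • u`, where `u` is uniform on the unit ball and the
scale `r` is continuous, positive and so small that `f` varies by at most `η` on the closed ball of
radius `r y` around `y`. The result is absolutely continuous, the integral of `f` moves by at most
`η`, and a small upper bound on `r` keeps the transport cost under control.
-/

/-- `IsCoupling π μ ν` says that `π` is a transport plan from `μ` to `ν`, i.e. a measure on the
product with marginals `μ` and `ν`. -/
structure IsCoupling {X Y : Type*} [MeasurableSpace X] [MeasurableSpace Y]
    (π : Measure (X × Y)) (μ : Measure X) (ν : Measure Y) : Prop where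
  map_fst : π.map Prod.fst = μ
  map_snd : π.map Prod.snd = ν

namespace IsCoupling

variable {X Y : Type*} [MeasurableSpace X] [MeasurableSpace Y]
  {π π' : Measure (X × Y)} {μ μ' : Measure X} {ν ν' : Measure Y}

lemma isProbabilityMeasure [IsProbabilityMeasure ν] (h : IsCoupling π μ ν) :
    IsProbabilityMeasure π :=
  have : IsProbabilityMeasure (π.map Prod.snd) := h.map_snd ▸ ‹_›
  Measure.isProbabilityMeasure_of_map Prod.snd

lemma add (h : IsCoupling π μ ν) (h' : IsCoupling π' μ' ν') :
    IsCoupling (π + π') (μ + μ') (ν + ν') where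
  map_fst := by rw [Measure.map_add _ _ measurable_fst, h.map_fst, h'.map_fst]
  map_snd := by rw [Measure.map_add _ _ measurable_snd, h.map_snd, h'.map_snd]

lemma smul (c : ℝ≥0) (h : IsCoupling π μ ν) : IsCoupling (c • π) (c • μ) (c • ν) where
  map_fst := by rw [Measure.map_smul, h.map_fst]
  map_snd := by rw [Measure.map_smul, h.map_snd]

lemma graph {T : X → Y} (hT : Measurable T) :
    IsCoupling (μ.map fun x => (x, T x)) μ (μ.map T) where
  map_fst := by
    rw [Measure.map_map measurable_fst (by fun_prop)]
    exact Measure.map_id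
  map_snd := Measure.map_map measurable_snd (by fun_prop)

end IsCoupling

/-- The infimum of `∫ d(x, y) ^ p dπ(x, y)` over all couplings `π` of `μ` and `ν`: the `p`-th power
of the Wasserstein distance, and the quantity that depends convexly on the measures. -/
noncomputable def optimalTransportCost {X : Type*} [PseudoEMetricSpace X] [MeasurableSpace X]
    (p : ℝ) (μ ν : Measure X) : ℝ≥0∞ :=
  ⨅ (π : Measure (X × X)) (_ : IsCoupling π μ ν), ∫⁻ z, edist z.1 z.2 ^ p ∂π

/-- The `p`-Wasserstein distance, for `0 < p`, between measures on a pseudo-emetric space. It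
extends `Wp` beyond Euclidean space. -/
noncomputable def wassersteinEDist {X : Type*} [PseudoEMetricSpace X] [MeasurableSpace X]
    (p : ℝ) (μ ν : Measure X) : ℝ≥0∞ :=
  optimalTransportCost p μ ν ^ (1 / p)

section OptimalTransportCost

variable {X : Type*} [PseudoEMetricSpace X] [MeasurableSpace X]
  {p : ℝ} {μ μ' ν ν' : Measure X}

lemma wassersteinEDist_le_iff (hp : 0 < p) {δ : ℝ≥0∞} :
    wassersteinEDist p μ ν ≤ δ ↔ optimalTransportCost p μ ν ≤ δ ^ p := by
  rw [wassersteinEDist, one_div, ENNReal.rpow_inv_le_iff hp]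

lemma IsCoupling.optimalTransportCost_le {π : Measure (X × X)} (h : IsCoupling π μ ν) :
    optimalTransportCost p μ ν ≤ ∫⁻ z, edist z.1 z.2 ^ p ∂π :=
  iInf₂_le π h

lemma exists_isCoupling_lintegral_lt {a : ℝ≥0∞} (h : optimalTransportCost p μ ν < a) :
    ∃ π, IsCoupling π μ ν ∧ ∫⁻ z, edist z.1 z.2 ^ p ∂π < a := by
  simpa only [optimalTransportCost, iInf_lt_iff, exists_prop] using h

lemma optimalTransportCost_add_le :
    optimalTransportCost p (μ + μ') (ν + ν') ≤
      optimalTransportCost p μ ν + optimalTransportCost p μ' ν' :=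
  ENNReal.le_iInf₂_add_iInf₂ fun _ h _ h' =>
    (h.add h').optimalTransportCost_le.trans_eq (lintegral_add_measure _ _ _)

lemma optimalTransportCost_smul_le {c : ℝ≥0} (hc : c ≠ 0) :
    optimalTransportCost p (c • μ) (c • ν) ≤ c * optimalTransportCost p μ ν := by
  simp only [optimalTransportCost,
    ENNReal.mul_iInf_of_ne (ENNReal.coe_ne_zero.2 hc) ENNReal.coe_ne_top]
  exact le_iInf₂ fun _ h =>
    (h.smul c).optimalTransportCost_le.trans_eq (lintegral_smul_measure _ _)

variable [OpensMeasurableSpace X]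

lemma IsCoupling.measure_le_measure_thickening_add {π : Measure (X × X)} (h : IsCoupling π μ ν)
    {ε : ℝ≥0∞} (hε : ε ≠ ∞) {B : Set X} (hB : MeasurableSet B) :
    μ B ≤ ν (Metric.thickening ε.toReal B) + π {z | ε ≤ edist z.1 z.2} := by
  rw [← h.map_fst, ← h.map_snd, Measure.map_apply measurable_fst hB,
    Measure.map_apply measurable_snd Metric.isOpen_thickening.measurableSet]
  refine (measure_mono fun z hz => ?_).trans (measure_union_le _ _)
  by_cases hfar : ε ≤ edist z.1 z.2
  · exact Or.inr hfar
  · left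
    rw [mem_preimage, Metric.mem_thickening_iff_exists_edist_lt, ENNReal.ofReal_toReal hε]
    exact ⟨z.1, hz, by rw [edist_comm]; exact not_le.1 hfar⟩

variable [SecondCountableTopology X]

lemma optimalTransportCost_map_le {T : X → X} (hT : Measurable T) :
    optimalTransportCost p μ (μ.map T) ≤ ∫⁻ x, edist x (T x) ^ p ∂μ :=
  (IsCoupling.graph hT).optimalTransportCost_le.trans_eq
    (lintegral_map (by fun_prop) (by fun_prop))

-- Markov's inequality bounds the mass that a plan moves by at least `ε` by its cost over `ε ^ p`.
lemma levyProkhorovEDist_rpow_le_optimalTransportCost (hp : 0 < p) [IsProbabilityMeasure μ]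
    [IsProbabilityMeasure ν] :
    levyProkhorovEDist μ ν ^ (p + 1) ≤ optimalTransportCost p μ ν := by
  have hp1 : 0 < p + 1 := by positivity
  refine le_iInf₂ fun π h => ?_
  rw [← ENNReal.le_rpow_inv_iff hp1]
  refine levyProkhorovEDist_le_of_forall_le μ ν _ fun ε B hε hεtop hB => ?_
  have hε0 : ε ≠ 0 := (zero_le.trans_lt hε).ne'
  refine (h.measure_le_measure_thickening_add hεtop.ne hB).trans ?_
  gcongr
  have hcost : ∫⁻ z, edist z.1 z.2 ^ p ∂π ≤ ε ^ (p + 1) :=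
    (ENNReal.rpow_inv_le_iff hp1).1 hε.le
  calc π {z | ε ≤ edist z.1 z.2}
      ≤ π {z | ε ^ p ≤ edist z.1 z.2 ^ p} :=
        measure_mono fun z hz => ENNReal.rpow_le_rpow hz hp.le
    _ ≤ (∫⁻ z, edist z.1 z.2 ^ p ∂π) / ε ^ p :=
        meas_ge_le_lintegral_div (by fun_prop) (by simp [hε0, hεtop.ne])
          (by simp [hp.le, hεtop.ne])
    _ ≤ ε := by
        refine ENNReal.div_le_of_le_mul (hcost.trans_eq ?_)
        rw [add_comm, ENNReal.rpow_add 1 p hε0 hεtop.ne, ENNReal.rpow_one]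

end OptimalTransportCost

lemma eq_of_optimalTransportCost_eq_zero {X : Type*} [PseudoEMetricSpace X] [MeasurableSpace X]
    [BorelSpace X] [SecondCountableTopology X] {p : ℝ} (hp : 0 < p) {μ ν : Measure X}
    [IsProbabilityMeasure μ] [IsProbabilityMeasure ν] (h : optimalTransportCost p μ ν = 0) :
    μ = ν := by
  have hLP : levyProkhorovEDist μ ν = 0 := by
    have := levyProkhorovEDist_rpow_le_optimalTransportCost (μ := μ) (ν := ν) hp
    rw [h, nonpos_iff_eq_zero] at this
    exact (ENNReal.rpow_eq_zero_iff_of_pos (by positivity)).1 this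
  refine ext_of_generate_finite _ ?_ isPiSystem_isClosed (fun F hF => ?_) (by simp)
  · rw [BorelSpace.measurable_eq (α := X), borel_eq_generateFrom_isClosed]
  · exact measure_eq_measure_of_levyProkhorovEDist_eq_zero_of_isClosed hLP hF
      ⟨1, one_pos, measure_ne_top _ _⟩ ⟨1, one_pos, measure_ne_top _ _⟩

lemma tendsto_measure_compl_closedBall_nat {X : Type*} [PseudoMetricSpace X] [MeasurableSpace X]
    [OpensMeasurableSpace X] {μ : Measure X} [IsFiniteMeasure μ] (x : X) :
    Tendsto (fun n : ℕ => μ (Metric.closedBall x n)ᶜ) atTop (𝓝 0) := by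
  have hanti : Antitone fun n : ℕ => (Metric.closedBall x n)ᶜ := fun m n hmn =>
    compl_subset_compl.2 (Metric.closedBall_subset_closedBall (by gcongr))
  have hempty : ⋂ n : ℕ, (Metric.closedBall x n)ᶜ = ∅ := by
    rw [← compl_iUnion, Metric.iUnion_closedBall_nat, compl_univ]
  simpa [Function.comp_def, hempty] using tendsto_measure_iInter_atTop (μ := μ)
    (fun n => measurableSet_closedBall.compl.nullMeasurableSet) hanti ⟨0, measure_ne_top _ _⟩

lemma exists_bounded_optimalTransportCost_lt {E : Type*} [SeminormedAddCommGroup E]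
    [MeasurableSpace E] [OpensMeasurableSpace E] [SecondCountableTopology E] {p : ℝ} (hp : 0 < p)
    {μ : Measure E} [IsProbabilityMeasure μ] (hμ : ∫⁻ x, ‖x‖ₑ ^ p ∂μ ≠ ∞) {a : ℝ≥0∞} (ha : 0 < a) :
    ∃ ν : Measure E, IsProbabilityMeasure ν ∧ optimalTransportCost p μ ν < a ∧
      ∃ R, ∀ᵐ y ∂ν, y ∈ Metric.closedBall 0 R := by
  have htail : Tendsto (fun n : ℕ => ∫⁻ x in (Metric.closedBall 0 n)ᶜ, ‖x‖ₑ ^ p ∂μ) atTop (𝓝 0) :=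
    tendsto_setLIntegral_zero hμ (tendsto_measure_compl_closedBall_nat 0)
  obtain ⟨n, hn⟩ := (htail.eventually_lt_const ha).exists
  set B : Set E := Metric.closedBall 0 n
  have hB : MeasurableSet B := measurableSet_closedBall
  have hT : Measurable (B.indicator id) := measurable_id.indicator hB
  refine ⟨μ.map (B.indicator id), Measure.isProbabilityMeasure_map hT.aemeasurable, ?_, n, ?_⟩
  · refine (optimalTransportCost_map_le hT).trans_lt (lt_of_eq_of_lt ?_ hn)
    rw [← lintegral_indicator hB.compl]
    refine lintegral_congr fun x => ?_
    by_cases hx : x ∈ B <;> simp [hx, hp]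
  · refine (ae_map_iff hT.aemeasurable hB).2 (.of_forall fun x => ?_)
    by_cases hx : x ∈ B
    · rwa [indicator_of_mem hx, id_eq]
    · simp [hx, B]

lemma exists_integrable_optimalTransportCost_lt {E F : Type*} [NormedAddCommGroup E] [ProperSpace E]
    [MeasurableSpace E] [BorelSpace E] [NormedAddCommGroup F] {p : ℝ} (hp : 0 < p) {μ : Measure E}
    [IsProbabilityMeasure μ] (hμ : Integrable (fun x => ‖x‖ ^ p) μ) {f : E → F}
    (hf : Continuous f) {a : ℝ≥0∞} (ha : 0 < a) :
    ∃ ν : Measure E, IsProbabilityMeasure ν ∧ optimalTransportCost p μ ν < a ∧ Integrable f ν := by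
  have hμ' : ∫⁻ x, ‖x‖ₑ ^ p ∂μ ≠ ∞ := by
    simpa [Real.enorm_rpow_of_nonneg, hp.le] using hμ.hasFiniteIntegral.ne
  obtain ⟨ν, hν, hcost, R, hR⟩ := exists_bounded_optimalTransportCost_lt hp hμ' ha
  refine ⟨ν, hν, hcost, ?_⟩
  rw [← Measure.restrict_eq_self_of_ae_mem hR]
  exact hf.continuousOn.integrableOn_compact (isCompact_closedBall 0 R)

section Integral

variable {α F : Type*} [MeasurableSpace α] [NormedAddCommGroup F] [NormedSpace ℝ F]

-- If one of the two functions is not integrable, neither is the other and both integrals are `0`.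
lemma dist_integral_le_of_ae_dist_le {P : Measure α} [IsProbabilityMeasure P] {g h : α → F}
    (hg : AEStronglyMeasurable g P) (hh : AEStronglyMeasurable h P) {η : ℝ}
    (hgh : ∀ᵐ x ∂P, dist (g x) (h x) ≤ η) : dist (∫ x, g x ∂P) (∫ x, h x ∂P) ≤ η := by
  simp only [dist_eq_norm] at hgh ⊢
  have hsub : Integrable (g - h) P := .of_bound (hg.sub hh) η hgh
  by_cases hi : Integrable h P
  · have hgi : Integrable g P := by simpa using hsub.add hi
    rw [← integral_sub hgi hi]
    simpa using norm_integral_le_of_norm_le_const hgh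
  · have hgi : ¬ Integrable g P := fun hgi => hi (by simpa using hgi.sub hsub)
    rw [integral_undef hi, integral_undef hgi, sub_self, norm_zero]
    obtain ⟨x, hx⟩ := hgh.exists
    exact (norm_nonneg _).trans hx

-- If `f` is not `ν`-integrable, both integrals on the left are `0`.
lemma dist_integral_smul_add_smul_le {ν ν₀ : Measure α} {f : α → F} (hf : Integrable f ν₀)
    {s t : ℝ≥0} (hst : s + t = 1) (hs : s ≠ 0) :
    dist (∫ x, f x ∂(s • ν + t • ν₀)) (∫ x, f x ∂ν) ≤
      t * dist (∫ x, f x ∂ν₀) (∫ x, f x ∂ν) := by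
  by_cases hi : Integrable f ν
  · rw [integral_add_measure hi.smul_measure_nnreal hf.smul_measure_nnreal,
      integral_smul_nnreal_measure, integral_smul_nnreal_measure]
    have hst' : (s : ℝ) + t = 1 := mod_cast hst
    have hdiff : s • ∫ x, f x ∂ν + t • ∫ x, f x ∂ν₀ - ∫ x, f x ∂ν =
        (t : ℝ) • (∫ x, f x ∂ν₀ - ∫ x, f x ∂ν) := by
      rw [NNReal.smul_def, NNReal.smul_def, eq_sub_of_add_eq hst']
      module
    rw [dist_eq_norm, dist_eq_norm, hdiff, norm_smul, Real.norm_eq_abs, NNReal.abs_eq]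
  · have hi' : ¬ Integrable f (s • ν + t • ν₀) := fun h =>
      hi <| (integrable_smul_measure (ENNReal.coe_ne_zero.2 hs) ENNReal.coe_ne_top).1
        h.left_of_add_measure
    rw [integral_undef hi, integral_undef hi', dist_self]
    positivity

end Integral

lemma exists_optimalTransportCost_lt_dist_integral_le {X F : Type*} [PseudoEMetricSpace X]
    [MeasurableSpace X] [NormedAddCommGroup F] [NormedSpace ℝ F] {p : ℝ} {μ ν ν₀ : Measure X}
    [IsProbabilityMeasure ν] [IsProbabilityMeasure ν₀] {C : ℝ≥0∞} (hC : C ≠ ∞)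
    (hν : optimalTransportCost p μ ν ≤ C) (hν₀ : optimalTransportCost p μ ν₀ < C)
    {f : X → F} (hf : Integrable f ν₀) {η : ℝ} (hη : 0 < η) :
    ∃ ν' : Measure X, IsProbabilityMeasure ν' ∧ optimalTransportCost p μ ν' < C ∧
      dist (∫ x, f x ∂ν') (∫ x, f x ∂ν) ≤ η := by
  obtain ⟨t, ht0, ht1, htη⟩ : ∃ t > (0 : ℝ≥0), t < 1 ∧
      t * dist (∫ x, f x ∂ν₀) (∫ x, f x ∂ν) < η := by
    have hcont : Continuous fun t : ℝ≥0 => t * dist (∫ x, f x ∂ν₀) (∫ x, f x ∂ν) := by fun_prop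
    exact ((eventually_lt_nhds one_pos).and
      ((hcont.tendsto 0).eventually_lt_const (by simpa using hη))).exists_gt
  set s := 1 - t
  have hs : s ≠ 0 := (tsub_pos_of_lt ht1).ne'
  have hst : s + t = 1 := tsub_add_cancel_of_le ht1.le
  have hst' : (s : ℝ≥0∞) + t = 1 := mod_cast hst
  refine ⟨s • ν + t • ν₀, ⟨by simpa using! hst'⟩, ?_,
    (dist_integral_smul_add_smul_le hf hst hs).trans htη.le⟩
  have hμ : s • μ + t • μ = μ := by rw [← add_smul, hst, one_smul]
  calc optimalTransportCost p μ (s • ν + t • ν₀)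
      = optimalTransportCost p (s • μ + t • μ) (s • ν + t • ν₀) := by rw [hμ]
    _ ≤ s * optimalTransportCost p μ ν + t * optimalTransportCost p μ ν₀ :=
      optimalTransportCost_add_le.trans
        (add_le_add (optimalTransportCost_smul_le hs) (optimalTransportCost_smul_le ht0.ne'))
    _ ≤ s * C + t * optimalTransportCost p μ ν₀ := by gcongr
    _ < s * C + t * C := ENNReal.add_lt_add_left (by finiteness)
      (ENNReal.mul_lt_mul_right (ENNReal.coe_ne_zero.2 ht0.ne') ENNReal.coe_ne_top hν₀)
    _ = C := by rw [← add_mul, hst', one_mul]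

lemma exists_pos_lintegral_add_rpow_lt {α : Type*} [MeasurableSpace α] {P : Measure α}
    [IsFiniteMeasure P] {p : ℝ} (hp : 0 ≤ p) {g : α → ℝ≥0∞} (hg : Measurable g) {a : ℝ≥0∞}
    (h : ∫⁻ x, g x ^ p ∂P < a) : ∃ ε > (0 : ℝ≥0), ∫⁻ x, (g x + ε) ^ p ∂P < a := by
  have hbound : ∫⁻ x, 2 ^ p * (g x ^ p + 1) ∂P ≠ ∞ := by
    rw [lintegral_const_mul' _ _ (by simp), lintegral_add_right _ measurable_const]
    simp [ENNReal.mul_eq_top, h.ne_top]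
  have hlim : Tendsto (fun ε : ℝ≥0 => ∫⁻ x, (g x + ε) ^ p ∂P) (𝓝 0) (𝓝 (∫⁻ x, g x ^ p ∂P)) := by
    refine tendsto_lintegral_filter_of_dominated_convergence _
      (.of_forall fun ε => by fun_prop) ?_ hbound (.of_forall fun x => ?_)
    · filter_upwards [eventually_le_nhds one_pos] with ε hε
      refine .of_forall fun x =>
        (ENNReal.add_rpow_le_two_rpow_mul_rpow_add_rpow _ _ hp).trans ?_
      gcongr
      exact ENNReal.rpow_le_one (mod_cast hε) hp
    · have hcont : Continuous fun ε : ℝ≥0 => (g x + ε) ^ p := by fun_prop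
      simpa using hcont.tendsto 0
  exact (hlim.eventually_lt_const h).exists_gt

lemma exists_continuous_pos_le_forall_dist_le {X Y : Type*} [PseudoMetricSpace X]
    [PseudoMetricSpace Y] {f : X → Y} (hf : Continuous f) {ε η : ℝ} (hε : 0 < ε) (hη : 0 < η) :
    ∃ r : C(X, ℝ), ∀ x, 0 < r x ∧ r x ≤ ε ∧ ∀ y, dist y x ≤ r x → dist (f y) (f x) ≤ η := by
  refine exists_continuous_forall_mem_convex_of_local_const
    (t := fun x => {r : ℝ | 0 < r ∧ r ≤ ε ∧ ∀ y, dist y x ≤ r → dist (f y) (f x) ≤ η})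
    (fun x => OrdConnected.convex ⟨?_⟩) fun x => ?_
  · rintro a ⟨ha, -, -⟩ b ⟨-, hbε, hb⟩ s ⟨has, hsb⟩
    exact ⟨ha.trans_le has, hsb.trans hbε, fun y hy => hb y (hy.trans hsb)⟩
  · obtain ⟨ρ, hρ, hfρ⟩ := Metric.continuous_iff.1 hf x (η / 2) (half_pos hη)
    refine ⟨min ε (ρ / 2), ?_⟩
    filter_upwards [Metric.ball_mem_nhds x (half_pos hρ)] with y hy
    refine ⟨by positivity, min_le_left _ _, fun z hz => ?_⟩
    have hyx : dist y x < ρ / 2 := hy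
    have hzx : dist z x < ρ := by
      linarith [dist_triangle z y x, hz.trans (min_le_right _ _)]
    linarith [dist_triangle_right (f z) (f y) (f x), hfρ y (by linarith), hfρ z hzx]

/-- The convolution of `ν` with `κ` at variable scale `r`: the law of `y + r y • u` for independent
`y ∼ ν` and `u ∼ κ`. A continuous function that is not uniformly continuous can still be kept nearly
constant along this perturbation by letting the scale depend on `y`. -/
noncomputable def variableConv {E : Type*} [AddCommGroup E] [Module ℝ E] [MeasurableSpace E]
    (r : E → ℝ) (κ ν : Measure E) : Measure E :=
  (ν.prod κ).map fun z => z.1 + r z.1 • z.2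

section VariableConv

variable {E : Type*} [NormedAddCommGroup E] [NormedSpace ℝ E] [MeasurableSpace E] [BorelSpace E]
  [SecondCountableTopology E] {r : E → ℝ} {κ ν : Measure E}

lemma isProbabilityMeasure_variableConv [IsProbabilityMeasure κ] [IsProbabilityMeasure ν]
    (hr : Measurable r) : IsProbabilityMeasure (variableConv r κ ν) :=
  Measure.isProbabilityMeasure_map (by fun_prop)

lemma variableConv_absolutelyContinuous [FiniteDimensional ℝ E] {vol : Measure E}
    [vol.IsAddHaarMeasure] [SFinite κ] (hr : Measurable r) (hr0 : ∀ x, r x ≠ 0) (hκ : κ ≪ vol) :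
    variableConv r κ ν ≪ vol := by
  refine .mk fun s hs hs0 => ?_
  have hmeas : Measurable fun z : E × E => z.1 + r z.1 • z.2 := by fun_prop
  rw [variableConv, Measure.map_apply hmeas hs, Measure.measure_prod_null (hmeas hs)]
  refine .of_forall fun y => hκ ?_
  change vol ((r y • ·) ⁻¹' ((y + ·) ⁻¹' s)) = 0
  rw [Measure.addHaar_preimage_smul vol (hr0 y), measure_preimage_add, hs0, mul_zero]

lemma dist_integral_variableConv_le {F : Type*} [NormedAddCommGroup F] [NormedSpace ℝ F]
    [IsProbabilityMeasure κ] [IsProbabilityMeasure ν] (hr : Measurable r)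
    (hκ : ∀ᵐ u ∂κ, ‖u‖ ≤ 1) {f : E → F} (hf : Continuous f) {η : ℝ}
    (hfr : ∀ x y, dist y x ≤ |r x| → dist (f y) (f x) ≤ η) :
    dist (∫ x, f x ∂(variableConv r κ ν)) (∫ x, f x ∂ν) ≤ η := by
  have hmeas : Measurable fun z : E × E => z.1 + r z.1 • z.2 := by fun_prop
  have hν : ∫ x, f x ∂ν = ∫ z, f z.1 ∂(ν.prod κ) := by
    rw [integral_fun_fst, probReal_univ, one_smul]
  rw [variableConv, integral_map hmeas.aemeasurable hf.aestronglyMeasurable, hν]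
  refine dist_integral_le_of_ae_dist_le
    (hf.comp_aestronglyMeasurable hmeas.aestronglyMeasurable)
    (hf.comp_aestronglyMeasurable measurable_fst.aestronglyMeasurable) ?_
  filter_upwards [Measure.quasiMeasurePreserving_snd.ae hκ] with z hz
  refine hfr _ _ ?_
  rw [dist_self_add_left, norm_smul, Real.norm_eq_abs]
  exact mul_le_of_le_one_right (abs_nonneg _) hz

lemma IsCoupling.variableConv_right [IsProbabilityMeasure κ] {μ : Measure E} {π : Measure (E × E)}
    [SFinite π] (h : IsCoupling π μ ν) (hr : Measurable r) :
    IsCoupling ((π.prod κ).map fun z => (z.1.1, z.1.2 + r z.1.2 • z.2)) μ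
      (variableConv r κ ν) where
  map_fst := by
    have hπ : (π.prod κ).map Prod.fst = π := measurePreserving_fst.map_eq
    calc ((π.prod κ).map fun z => (z.1.1, z.1.2 + r z.1.2 • z.2)).map Prod.fst
        = ((π.prod κ).map Prod.fst).map Prod.fst := by
          rw [Measure.map_map measurable_fst (by fun_prop),
            Measure.map_map measurable_fst measurable_fst]
          rfl
      _ = μ := by rw [hπ, h.map_fst]
  map_snd := by
    have hprod : ν.prod κ = (π.prod κ).map (Prod.map Prod.snd id) := by
      rw [← Measure.map_prod_map _ _ measurable_snd measurable_id, h.map_snd, Measure.map_id]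
    rw [Measure.map_map measurable_snd (by fun_prop), variableConv, hprod,
      Measure.map_map (by fun_prop) (by fun_prop)]
    rfl

lemma optimalTransportCost_variableConv_le [IsProbabilityMeasure κ] {p : ℝ} (hp : 0 ≤ p)
    {μ : Measure E} {π : Measure (E × E)} [SFinite π] (h : IsCoupling π μ ν) (hr : Measurable r)
    (hκ : ∀ᵐ u ∂κ, ‖u‖ ≤ 1) {ε : ℝ≥0} (hrε : ∀ x, |r x| ≤ ε) :
    optimalTransportCost p μ (variableConv r κ ν) ≤
      ∫⁻ z, (edist z.1 z.2 + ε) ^ p ∂π := by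
  refine (h.variableConv_right hr (κ := κ)).optimalTransportCost_le.trans ?_
  rw [lintegral_map (by fun_prop) (by fun_prop)]
  calc ∫⁻ z, edist z.1.1 (z.1.2 + r z.1.2 • z.2) ^ p ∂(π.prod κ)
      ≤ ∫⁻ z, (edist z.1.1 z.1.2 + ε) ^ p ∂(π.prod κ) := by
        refine lintegral_mono_ae ?_
        filter_upwards [Measure.quasiMeasurePreserving_snd.ae hκ] with z hz
        gcongr
        refine (edist_triangle _ z.1.2 _).trans ?_
        gcongr
        rw [edist_dist, dist_self_add_right, norm_smul, Real.norm_eq_abs]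
        refine ENNReal.ofReal_le_of_le_toReal ?_
        exact (mul_le_of_le_one_right (abs_nonneg _) hz).trans (hrε _)
    _ = ∫⁻ z, (edist z.1 z.2 + ε) ^ p ∂π :=
        measurePreserving_fst.lintegral_comp (f := fun z : E × E => (edist z.1 z.2 + ε) ^ p)
          (by fun_prop)

end VariableConv

lemma exists_absolutelyContinuous_optimalTransportCost_lt_dist_integral_le {E F : Type*}
    [NormedAddCommGroup E] [NormedSpace ℝ E] [FiniteDimensional ℝ E] [MeasurableSpace E]
    [BorelSpace E] (vol : Measure E) [vol.IsAddHaarMeasure] [NormedAddCommGroup F] [NormedSpace ℝ F]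
    {p : ℝ} (hp : 0 ≤ p) {μ ν : Measure E} [IsProbabilityMeasure ν]
    {a : ℝ≥0∞} (h : optimalTransportCost p μ ν < a) {f : E → F} (hf : Continuous f)
    {η : ℝ} (hη : 0 < η) :
    ∃ ν' : Measure E, IsProbabilityMeasure ν' ∧ ν' ≪ vol ∧ optimalTransportCost p μ ν' < a ∧
      dist (∫ x, f x ∂ν') (∫ x, f x ∂ν) ≤ η := by
  obtain ⟨π, hπ, hπa⟩ := exists_isCoupling_lintegral_lt h
  have : IsProbabilityMeasure π := hπ.isProbabilityMeasure
  obtain ⟨ε, hε, hεa⟩ := exists_pos_lintegral_add_rpow_lt hp (by fun_prop) hπa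
  obtain ⟨r, hr⟩ := exists_continuous_pos_le_forall_dist_le hf (NNReal.coe_pos.2 hε) hη
  have hr_abs (x : E) : |r x| = r x := abs_of_pos (hr x).1
  let B : Set E := Metric.closedBall 0 1
  let κ : Measure E := ProbabilityTheory.cond vol B
  have : IsProbabilityMeasure κ := ProbabilityTheory.cond_isProbabilityMeasure_of_finite
    (Metric.measure_closedBall_pos vol 0 one_pos).ne' measure_closedBall_lt_top.ne
  have hκ : ∀ᵐ u ∂κ, ‖u‖ ≤ 1 := by
    simpa [B] using ProbabilityTheory.ae_cond_mem (μ := vol) (s := B) measurableSet_closedBall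
  exact ⟨variableConv r κ ν, isProbabilityMeasure_variableConv (by fun_prop),
    variableConv_absolutelyContinuous (by fun_prop) (fun x => (hr x).1.ne')
      ProbabilityTheory.cond_absolutelyContinuous,
    (optimalTransportCost_variableConv_le hp hπ (by fun_prop) hκ
      fun x => (hr_abs x).trans_le (hr x).2.1).trans_lt hεa,
    dist_integral_variableConv_le (by fun_prop) hκ hf
      fun x y hxy => (hr x).2.2 y (hxy.trans_eq (hr_abs x))⟩

lemma Wp_eq_wassersteinEDist {d : ℕ} {p : ℝ} (hp : 0 < p)
    (μ ν : Measure (EuclideanSpace ℝ (Fin d))) : Wp p μ ν = wassersteinEDist p μ ν := by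
  have hedist (x y : EuclideanSpace ℝ (Fin d)) :
      ENNReal.ofReal (‖x - y‖ ^ p) = edist x y ^ p := by
    rw [edist_dist, dist_eq_norm, ENNReal.ofReal_rpow_of_nonneg (norm_nonneg _) hp.le]
  have hcoupling (π : Measure (EuclideanSpace ℝ (Fin d) × EuclideanSpace ℝ (Fin d))) :
      π ∈ {π | π.map Prod.fst = μ ∧ π.map Prod.snd = ν} ↔ IsCoupling π μ ν :=
    ⟨fun h => ⟨h.1, h.2⟩, fun h => ⟨h.map_fst, h.map_snd⟩⟩
  simp only [Wp, hedist, hcoupling, wassersteinEDist, optimalTransportCost]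
  exact ((ENNReal.orderIsoRpow (1 / p) (by positivity)).map_iInf₂ _).symm

lemma sSup_eq_of_closure_eq {α : Type*} [TopologicalSpace α] [ConditionallyCompleteLinearOrder α]
    [OrderClosedTopology α] {s t : Set α} (h : closure s = closure t) : sSup s = sSup t := by
  have hub : upperBounds s = upperBounds t := by
    rw [← upperBounds_closure, h, upperBounds_closure]
  have hbdd : BddAbove s ↔ BddAbove t := by rw [BddAbove, hub, BddAbove]
  obtain rfl | hs := s.eq_empty_or_nonempty
  · rw [closure_empty, eq_comm, closure_empty_iff] at h
    rw [h]
  have ht : t.Nonempty := by rwa [← closure_nonempty_iff, ← h, closure_nonempty_iff]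
  by_cases hs' : BddAbove s
  · exact ((isLUB_congr hub).1 (isLUB_csSup hs hs')).unique (isLUB_csSup ht (hbdd.1 hs'))
  · rw [csSup_of_not_bddAbove hs', csSup_of_not_bddAbove (hbdd.not.1 hs')]

-- Comparing closures instead of suprema gives content also when the integrals are unbounded, where
-- `sSup` would be `0` on both sides.
theorem stmt10_general {E F : Type*} [NormedAddCommGroup E] [NormedSpace ℝ E]
    [FiniteDimensional ℝ E] [MeasurableSpace E] [BorelSpace E] [NormedAddCommGroup F]
    [NormedSpace ℝ F] [CompleteSpace F] (vol : Measure E) [vol.IsAddHaarMeasure] {p : ℝ}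
    (hp : 0 < p) (μ : Measure E) [IsProbabilityMeasure μ] (hac : μ ≪ vol)
    (hmom : Integrable (fun x => ‖x‖ ^ p) μ) (f : E → F) (hf : Continuous f) (δ : ℝ≥0) :
    closure {v : F | ∃ ν : Measure E, IsProbabilityMeasure ν ∧ wassersteinEDist p μ ν ≤ δ ∧
        v = ∫ x, f x ∂ν} =
      closure {v : F | ∃ ν : Measure E, IsProbabilityMeasure ν ∧ wassersteinEDist p μ ν ≤ δ ∧
        ν ≪ vol ∧ v = ∫ x, f x ∂ν} := by
  simp only [wassersteinEDist_le_iff hp]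
  refine (closure_minimal ?_ isClosed_closure).antisymm
    (closure_mono fun v ⟨ν, hν, hcost, _, hv⟩ => ⟨ν, hν, hcost, hv⟩)
  rintro _ ⟨ν, hν, hcost, rfl⟩
  obtain rfl | hδ := eq_zero_or_pos δ
  · have hcost0 : optimalTransportCost p μ ν = 0 := by simpa [hp] using hcost
    obtain rfl := eq_of_optimalTransportCost_eq_zero hp hcost0
    exact subset_closure ⟨μ, hν, hcost, hac, rfl⟩
  · have hδp : 0 < (δ : ℝ≥0∞) ^ p := ENNReal.rpow_pos (mod_cast hδ) ENNReal.coe_ne_top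
    obtain ⟨ν₀, hν₀, hcost₀, hint₀⟩ := exists_integrable_optimalTransportCost_lt hp hmom hf hδp
    refine Metric.mem_closure_iff.2 fun η hη => ?_
    obtain ⟨ν₁, hν₁, hcost₁, hdist₁⟩ := exists_optimalTransportCost_lt_dist_integral_le
      (by finiteness) hcost hcost₀ hint₀ (show 0 < η / 3 by positivity)
    obtain ⟨ν₂, hν₂, hac₂, hcost₂, hdist₂⟩ :=
      exists_absolutelyContinuous_optimalTransportCost_lt_dist_integral_le vol hp.le hcost₁ hf
        (show 0 < η / 3 by positivity)
    refine ⟨_, ⟨ν₂, hν₂, hcost₂.le, hac₂, rfl⟩, ?_⟩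
    rw [dist_comm]
    linarith [dist_triangle (∫ x, f x ∂ν₂) (∫ x, f x ∂ν₁) (∫ x, f x ∂ν)]

/-- If `μ` is absolutely continuous w.r.t. Lebesgue measure, the supremum of `∫ f dν`
over the Wasserstein ball is not changed by restricting to absolutely continuous `ν`. -/
theorem stmt10 {d : ℕ} (p : ℝ) (hp : 1 < p)
    (μ : Measure (EuclideanSpace ℝ (Fin d))) [IsProbabilityMeasure μ]
    (hac : μ ≪ (volume : Measure (EuclideanSpace ℝ (Fin d))))
    (hmom : Integrable (fun x => ‖x‖ ^ p) μ)
    (f : EuclideanSpace ℝ (Fin d) → ℝ) (hf : Continuous f)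
    (c : ℝ) (hb : ∀ x, f x ≤ c * (1 + ‖x‖ ^ p))
    (δ : ℝ) (hδ : 0 ≤ δ) :
    sSup {r : ℝ | ∃ ν : Measure (EuclideanSpace ℝ (Fin d)), IsProbabilityMeasure ν ∧
        Wp p μ ν ≤ ENNReal.ofReal δ ∧ r = ∫ x, f x ∂ν}
      = sSup {r : ℝ | ∃ ν : Measure (EuclideanSpace ℝ (Fin d)), IsProbabilityMeasure ν ∧
        Wp p μ ν ≤ ENNReal.ofReal δ ∧
        ν ≪ (volume : Measure (EuclideanSpace ℝ (Fin d))) ∧ r = ∫ x, f x ∂ν} := by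
  simp only [Wp_eq_wassersteinEDist (zero_lt_one.trans hp)]
  exact sSup_eq_of_closure_eq
    (stmt10_general volume (zero_lt_one.trans hp) μ hac hmom f hf δ.toNNReal)
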